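/- arXiv:1904.13133 — 2 statements merged into one kernel-verified Lean document; each statement's English description precedes it below -/
import Mathlib

section
/- Let S be a semigroup. If every countable subset of S is contained in a countable amenable subsemigroup of S, then S is amenable. Conversely, if S is amenable and satisfies the Klawe condition, then every countable subset of S is contained in a countable amenable subsemigroup of S. -/
/-!
Both directions rest on the fact that an ultrafilter limit of almost invariant finitely additive
probability measures is invariant (`amenable_of_almost_invariant`).

If countable sets lie in countable amenable subsemigroups, then for every finite `H ⊆ S` an
invariant mean on a subsemigroup containing `H`, extended by zero to `S`, is a mean on `S` invariant
under the elements of `H`.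

Conversely, Day's theorem (`exists_finite_almost_invariant`) provides, for every finite `H ⊆ S` and
every `ε > 0`, a finitely supported mean which every `s ∈ H` moves by at most `ε`, uniformly over
all subsets of `S`. Closing the given countable set under products and under the supports of these
means for `ε = 1 / (n + 1)` gives a countable subsemigroup `T`. The means attached to finite subsets
of `T` restrict to `T`, so `T` has almost invariant means and is amenable.

Day's theorem is proved by separation: if `0` were not in the closed convex hull of the vectors
`(δ_{sx} - δ_x)_{s ∈ H}`, a continuous functional would yield bounded functions `f_s` with
`∑ s ∈ H, (f_s (s x) - f_s x)` bounded below by a positive constant, whereas the invariant mean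
integrates this sum to zero (`not_card_lt_sum_sub`).
-/

/-- A finitely additive probability measure on a set `Y`. -/
def IsFinAddProb {Y : Type*} (μ : Set Y → ℝ) : Prop :=
  (∀ A : Set Y, 0 ≤ μ A ∧ μ A ≤ 1) ∧ μ (Set.univ : Set Y) = 1 ∧
    ∀ A B : Set Y, Disjoint A B → μ (A ∪ B) = μ A + μ B

/-- A semigroup is (left) amenable if it carries a left invariant finitely additive
probability measure: `μ(s⁻¹A) = μ(A)` where `s⁻¹A = {t | s * t ∈ A}`. -/
def SemigroupAmenable (S : Type*) [Mul S] : Prop :=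
  ∃ μ : Set S → ℝ, IsFinAddProb μ ∧ ∀ (s : S) (A : Set S), μ {t | s * t ∈ A} = μ A

/-- The Klawe condition: `s x = s y` implies `x t = y t` for some `t`. -/
def KlaweCondition (S : Type*) [Mul S] : Prop :=
  ∀ s x y : S, s * x = s * y → ∃ t : S, x * t = y * t

/-! ### Finitely additive probability measures -/

section FinAdd

variable {Y : Type*} {μ : Set Y → ℝ}

lemma IsFinAddProb.empty (h : IsFinAddProb μ) : μ ∅ = 0 := by
  have := h.2.2 ∅ ∅ (by simp)
  simp at this
  exact this

lemma IsFinAddProb.mono (h : IsFinAddProb μ) {A B : Set Y} (hAB : A ⊆ B) : μ A ≤ μ B := by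
  have h1 := h.2.2 A (B \ A) Set.disjoint_sdiff_right
  rw [Set.union_sdiff_cancel hAB] at h1
  linarith [(h.1 (B \ A)).1]

lemma IsFinAddProb.inter_eq (h : IsFinAddProb μ) {T : Set Y} (hT : μ T = 1) (A : Set Y) :
    μ (A ∩ T) = μ A := by
  have h1 := h.2.2 (A ∩ T) (A \ T) Set.disjoint_sdiff_inter.symm
  rw [Set.inter_union_sdiff] at h1
  have h2 := h.2.2 T (A \ T) Set.disjoint_sdiff_right
  linarith [(h.1 (A \ T)).1, (h.1 (T ∪ A \ T)).2]

/-- Finite additivity over the fibres of a map `K` lying over a finite set. -/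
lemma IsFinAddProb.preimage_finset (h : IsFinAddProb μ) {β : Type*} (K : Y → β) (R : Finset β) :
    μ (K ⁻¹' (R : Set β)) = ∑ v ∈ R, μ (K ⁻¹' {v}) := by
  classical
  induction R using Finset.induction_on with
  | empty => simpa using h.empty
  | insert a R ha ih =>
    rw [Finset.sum_insert ha, ← ih, Finset.coe_insert, Set.insert_eq, Set.preimage_union]
    exact h.2.2 _ _ (Disjoint.preimage _ (by simpa using ha))

/-- The integral of `k ∘ K`, computed over the fibres of the finite-valued map `K`, depends only
on the distribution of `k ∘ K`. -/
lemma IsFinAddProb.sum_fibres (h : IsFinAddProb μ) {β : Type*} (K : Y → β) (R : Finset β)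
    (hR : ∀ y, K y ∈ R) (k : β → ℤ) (Q : Finset ℤ) (hQ : ∀ v ∈ R, k v ∈ Q) :
    ∑ v ∈ R, (k v : ℝ) * μ (K ⁻¹' {v}) = ∑ c ∈ Q, (c : ℝ) * μ {y | k (K y) = c} := by
  classical
  rw [← Finset.sum_fiberwise_of_maps_to hQ]
  refine Finset.sum_congr rfl fun c _ => ?_
  have : {y | k (K y) = c} = K ⁻¹' ((R.filter fun v => k v = c : Finset β) : Set β) := by
    ext y; simp [hR]
  rw [this, h.preimage_finset, Finset.mul_sum]
  refine Finset.sum_congr rfl fun v hv => ?_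
  rw [(Finset.mem_filter.1 hv).2]

end FinAdd

/-! ### Day's theorem -/

/-- An invariant mean integrates `f(s ·) - f` to zero for bounded `f`, so a finite sum of such
differences cannot be bounded below by a positive constant. The bound `H.card + 1` on the left
leaves room for rounding the functions `f s` down to integer values, after which only
finite-valued functions have to be integrated. -/
lemma not_card_lt_sum_sub {S : Type*} [Mul S] {μ : Set S → ℝ} (hμ : IsFinAddProb μ)
    (hinv : ∀ (s : S) (A : Set S), μ {t | s * t ∈ A} = μ A) (H : Finset S) (f : S → S → ℝ)
    (M : ℝ) (hM : ∀ s x, |f s x| ≤ M) :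
    ¬ ∀ x, (H.card : ℝ) + 1 ≤ ∑ s ∈ H, (f s (s * x) - f s x) := by
  classical
  intro hf
  -- `K` records the integer parts of all functions involved.
  let K : S → (H → ℤ × ℤ) := fun x s => (⌊f s (s * x)⌋, ⌊f s x⌋)
  let Q : Finset ℤ := Finset.Icc ⌊-M⌋ ⌊M⌋
  let R : Finset (H → ℤ × ℤ) := Fintype.piFinset fun _ => Q ×ˢ Q
  have hQ : ∀ s x, ⌊f s x⌋ ∈ Q := fun s x =>
    Finset.mem_Icc.2 ⟨Int.floor_le_floor (abs_le.1 (hM s x)).1,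
      Int.floor_le_floor (abs_le.1 (hM s x)).2⟩
  have hR : ∀ x, K x ∈ R := fun x =>
    Fintype.mem_piFinset.2 fun s => Finset.mem_product.2 ⟨hQ _ _, hQ _ _⟩
  have hone : ∑ v ∈ R, μ (K ⁻¹' {v}) = 1 := by
    rw [← hμ.preimage_finset, ← hμ.2.1]
    congr 1
    ext x; simp [hR]
  have hzero : ∀ s : H, ∑ v ∈ R, (((v s).1 : ℝ) - (v s).2) * μ (K ⁻¹' {v}) = 0 := by
    intro s
    have hmem : ∀ v ∈ R, v s ∈ Q ×ˢ Q := fun v hv => Fintype.mem_piFinset.1 hv s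
    simp only [sub_mul, Finset.sum_sub_distrib]
    rw [hμ.sum_fibres K R hR (fun v => (v s).1) Q fun v hv => (Finset.mem_product.1 (hmem v hv)).1,
      hμ.sum_fibres K R hR (fun v => (v s).2) Q fun v hv => (Finset.mem_product.1 (hmem v hv)).2,
      sub_eq_zero]
    refine Finset.sum_congr rfl fun c _ => ?_
    rw [← hinv s {y | (K y s).2 = c}]
    rfl
  have hlow : ∀ x, (1 : ℝ) ≤ ∑ s : H, (((K x s).1 : ℝ) - (K x s).2) := by
    intro x
    have h1 : ∑ s ∈ H, (f s (s * x) - f s x - 1) ≤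
        ∑ s ∈ H, ((⌊f s (s * x)⌋ : ℝ) - ⌊f s x⌋) :=
      Finset.sum_le_sum fun s _ => by
        linarith [Int.floor_le (f s x), Int.lt_floor_add_one (f s (s * x))]
    rw [Finset.sum_sub_distrib, Finset.sum_const, nsmul_eq_mul, mul_one,
      ← Finset.sum_coe_sort H] at h1
    rw [← Finset.sum_coe_sort H (fun s => ((⌊f s (s * x)⌋ : ℝ) - ⌊f s x⌋))] at h1
    have h2 := hf x
    rw [← Finset.sum_coe_sort H] at h2
    change 1 ≤ ∑ s : H, ((⌊f s (s * x)⌋ : ℝ) - ⌊f s x⌋)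
    linarith
  have key : ∑ v ∈ R, μ (K ⁻¹' {v}) ≤
      ∑ v ∈ R, (∑ s : H, (((v s).1 : ℝ) - (v s).2)) * μ (K ⁻¹' {v}) := by
    refine Finset.sum_le_sum fun v _ => ?_
    rcases (K ⁻¹' {v}).eq_empty_or_nonempty with he | ⟨x, rfl⟩
    · rw [he, hμ.empty, mul_zero]
    · exact le_mul_of_one_le_left (hμ.1 _).1 (hlow x)
  simp only [Finset.sum_mul] at key
  rw [Finset.sum_comm, hone, Finset.sum_eq_zero fun s _ => hzero s] at key
  linarith

/-- Day's theorem in vector form: for a bounded map `d` into a normed space, suitable finite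
convex combinations of the points `d x` are almost unchanged when each `x` is replaced by `s * x`.
Otherwise the vectors `(d (s * x) - d x)_{s ∈ H}` would be separated from `0` by a functional,
which `not_card_lt_sum_sub` excludes. -/
lemma exists_almost_invariant {S : Type*} [Mul S] {μ : Set S → ℝ} (hμ : IsFinAddProb μ)
    (hinv : ∀ (s : S) (A : Set S), μ {t | s * t ∈ A} = μ A) (H : Finset S)
    {E : Type*} [NormedAddCommGroup E] [NormedSpace ℝ E] (d : S → E) (hd : ∀ x, ‖d x‖ ≤ 1)
    (ε : ℝ) (hε : 0 < ε) :
    ∃ (ι : Type) (t : Finset ι) (w : ι → ℝ) (z : ι → S), (∀ i ∈ t, 0 ≤ w i) ∧ ∑ i ∈ t, w i = 1 ∧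
      ∀ s ∈ H, ‖∑ i ∈ t, w i • (d (s * z i) - d (z i))‖ < ε := by
  classical
  let v : S → (H → E) := fun x s => d (s * x) - d x
  have h0 : (0 : H → E) ∈ closure (convexHull ℝ (Set.range v)) := by
    by_contra hcon
    obtain ⟨f, u, hu, hf⟩ := geometric_hahn_banach_point_closed
      (convex_convexHull ℝ (Set.range v)).closure isClosed_closure hcon
    rw [map_zero] at hu
    let g : S → S → ℝ := fun s x => if h : s ∈ H then f (Pi.single ⟨s, h⟩ (d x)) else 0
    have hg : ∀ s x, |g s x| ≤ ‖f‖ := by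
      intro s x
      by_cases h : s ∈ H
      · simp only [g, h, dif_pos]
        refine (f.le_opNorm _).trans ?_
        rw [Pi.norm_single]
        exact mul_le_of_le_one_right (norm_nonneg _) (hd x)
      · simp [g, h]
    -- Rescale so that the lower bound `u` becomes `H.card + 1`.
    have hc : 0 ≤ ((H.card : ℝ) + 1) / u := by positivity
    refine not_card_lt_sum_sub hμ hinv H (fun s x => ((H.card : ℝ) + 1) / u * g s x)
      (((H.card : ℝ) + 1) / u * ‖f‖) (fun s x => ?_) fun x => ?_
    · rw [abs_mul, abs_of_nonneg hc]
      exact mul_le_mul_of_nonneg_left (hg s x) hc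
    · have hx : u < f (v x) := hf _ (subset_closure (subset_convexHull ℝ _ ⟨x, rfl⟩))
      have hsum : f (v x) = ∑ s ∈ H, (g s (s * x) - g s x) := by
        rw [← Finset.univ_sum_single (v x), map_sum, ← Finset.sum_coe_sort H]
        refine Finset.sum_congr rfl fun s _ => ?_
        simp only [g, v, s.2, dif_pos, Subtype.coe_eta]
        rw [Pi.single_sub, map_sub]
      simp only [← mul_sub]
      rw [← Finset.mul_sum, ← hsum, div_mul_eq_mul_div, le_div_iff₀ hu]
      exact mul_le_mul_of_nonneg_left hx.le (by positivity)
  obtain ⟨y, hy, hdist⟩ := Metric.mem_closure_iff.1 h0 ε hε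
  rw [convexHull_eq] at hy
  obtain ⟨ι, t, w, z, hw, hw1, hz, rfl⟩ := hy
  rw [Finset.centerMass_eq_of_sum_1 _ _ hw1, dist_zero_left] at hdist
  have ht : t.Nonempty := by
    by_contra h
    rw [Finset.not_nonempty_iff_eq_empty] at h
    simp [h] at hw1
  obtain ⟨x₀, -⟩ := hz _ ht.choose_spec
  have hz' : ∀ i, ∃ x, i ∈ t → v x = z i := fun i => by
    by_cases hi : i ∈ t
    · obtain ⟨x, hx⟩ := hz i hi
      exact ⟨x, fun _ => hx⟩
    · exact ⟨x₀, fun h => absurd h hi⟩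
  choose x hx using hz'
  refine ⟨ι, t, w, x, hw, hw1, fun s hs => ?_⟩
  refine lt_of_le_of_lt ?_ hdist
  have hEq : ∑ i ∈ t, w i • (d (s * x i) - d (x i)) = (∑ i ∈ t, w i • z i) ⟨s, hs⟩ := by
    rw [Finset.sum_apply]
    refine Finset.sum_congr rfl fun i hi => ?_
    rw [← hx i hi]
    rfl
  rw [hEq]
  exact norm_le_pi_norm (∑ i ∈ t, w i • z i) ⟨s, hs⟩

/-- Day's theorem: an amenable `S` carries finitely supported means which are invariant up to `ε`
under the elements of `H`, uniformly over all sets `A`. It comes from `exists_almost_invariant` with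
`d x` the point mass at `x`, seen as the bounded function `A ↦ 1_A(x)` on the power set of `S`. -/
lemma exists_finite_almost_invariant {S : Type*} [Mul S] (hS : SemigroupAmenable S)
    (H : Finset S) (ε : ℝ) (hε : 0 < ε) :
    ∃ (F : Finset S) (ν : Set S → ℝ), IsFinAddProb ν ∧ ν F = 1 ∧
      ∀ s ∈ H, ∀ A : Set S, |ν {t | s * t ∈ A} - ν A| ≤ ε := by
  classical
  obtain ⟨μ, hμ, hinv⟩ := hS
  let _ : TopologicalSpace (Set S) := ⊥
  have : DiscreteTopology (Set S) := ⟨rfl⟩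
  have hb : ∀ (x : S) (A : Set S), ‖(if x ∈ A then (1 : ℝ) else 0)‖ ≤ 1 := fun x A => by
    split_ifs <;> simp
  let d : S → BoundedContinuousFunction (Set S) ℝ := fun x =>
    BoundedContinuousFunction.ofNormedAddCommGroupDiscrete
      (fun A => if x ∈ A then (1 : ℝ) else 0) 1 (hb x)
  have hd : ∀ x, ‖d x‖ ≤ 1 := fun x =>
    (BoundedContinuousFunction.norm_le zero_le_one).2 (hb x)
  obtain ⟨ι, t, w, z, hw, hw1, h⟩ := exists_almost_invariant hμ hinv H d hd ε hε
  refine ⟨t.image z, fun A => ∑ i ∈ t, w i * (if z i ∈ A then 1 else 0),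
    ⟨fun A => ⟨?_, ?_⟩, ?_, fun A B hAB => ?_⟩, ?_, fun s hs A => ?_⟩
  · exact Finset.sum_nonneg fun i hi => mul_nonneg (hw i hi) (by split_ifs <;> simp)
  · exact (Finset.sum_le_sum fun i hi =>
      mul_le_of_le_one_right (hw i hi) (by split_ifs <;> simp)).trans hw1.le
  · simpa using hw1
  · beta_reduce
    rw [← Finset.sum_add_distrib]
    refine Finset.sum_congr rfl fun i _ => ?_
    have hdisj : z i ∈ A → z i ∉ B := fun h1 => Set.disjoint_left.1 hAB h1
    by_cases h1 : z i ∈ A <;> by_cases h2 : z i ∈ B <;> simp_all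
  · refine (Finset.sum_congr rfl fun i hi => ?_).trans hw1
    rw [if_pos (Finset.mem_coe.2 (Finset.mem_image_of_mem z hi)), mul_one]
  · have h1 := (BoundedContinuousFunction.norm_coe_le_norm
      (∑ i ∈ t, w i • (d (s * z i) - d (z i))) A).trans (h s hs).le
    rw [BoundedContinuousFunction.coe_sum, Finset.sum_apply, Real.norm_eq_abs] at h1
    beta_reduce
    rw [← Finset.sum_sub_distrib]
    simp only [← mul_sub]
    exact h1

/-! ### Limits of almost invariant means -/

/-- An ultrafilter limit of almost invariant means is an invariant mean. -/
lemma amenable_of_almost_invariant {S : Type*} [Mul S]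
    (h : ∀ (H : Finset S) (ε : ℝ), 0 < ε → ∃ ν : Set S → ℝ, IsFinAddProb ν ∧
      ∀ s ∈ H, ∀ A : Set S, |ν {t | s * t ∈ A} - ν A| ≤ ε) :
    SemigroupAmenable S := by
  classical
  choose ν hν hinv using fun p : Finset S × ℕ =>
    h p.1 (1 / ((p.2 : ℝ) + 1)) Nat.one_div_pos_of_nat
  let U : Ultrafilter (Finset S × ℕ) := Ultrafilter.of Filter.atTop
  have hU : (U : Filter (Finset S × ℕ)) ≤ Filter.atTop := Ultrafilter.of_le _
  have hlim : ∀ A : Set S, ∃ x ∈ Set.Icc (0 : ℝ) 1, Filter.Tendsto (fun p => ν p A) U (nhds x) := by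
    intro A
    refine isCompact_Icc.ultrafilter_le_nhds (U.map fun p => ν p A) ?_
    rw [Filter.le_principal_iff]
    exact Filter.mem_map.2 (Filter.Eventually.of_forall fun p => (hν p).1 A)
  choose μ hμ hμlim using hlim
  refine ⟨μ, ⟨hμ, ?_, fun A B hAB => ?_⟩, fun s A => ?_⟩
  · refine tendsto_nhds_unique (hμlim Set.univ) ?_
    simp only [(hν _).2.1]
    exact tendsto_const_nhds
  · refine tendsto_nhds_unique (hμlim (A ∪ B)) ?_
    simp only [(hν _).2.2 A B hAB]
    exact (hμlim A).add (hμlim B)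
  · rw [← sub_eq_zero]
    refine tendsto_nhds_unique ((hμlim _).sub (hμlim A)) ?_
    have hz : Filter.Tendsto (fun p : Finset S × ℕ => 1 / ((p.2 : ℝ) + 1)) U (nhds 0) :=
      (tendsto_one_div_add_atTop_nhds_zero_nat.comp
        (Filter.tendsto_snd.mono_left Filter.prod_atTop_atTop_eq.ge)).mono_left hU
    refine squeeze_zero_norm' ?_ hz
    have hev : ∀ᶠ p : Finset S × ℕ in (U : Filter (Finset S × ℕ)), (({s}, 0) : Finset S × ℕ) ≤ p :=
      hU (Filter.eventually_ge_atTop _)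
    filter_upwards [hev] with p hp
    exact hinv p s (hp.1 (Finset.mem_singleton_self s)) A

/-! ### Passage to countable subsemigroups and back -/

/-- A countable set is contained in a countable set closed under a given operation which assigns
a countable set to every finite set. -/
lemma exists_countable_closed {S : Type*} (D : Finset S → Set S) (hD : ∀ H, (D H).Countable)
    (C : Set S) (hC : C.Countable) :
    ∃ T : Set S, C ⊆ T ∧ T.Countable ∧ ∀ H : Finset S, (H : Set S) ⊆ T → D H ⊆ T := by
  let g : Set S → Set S := fun B => B ∪ ⋃ H ∈ {H : Finset S | (H : Set S) ⊆ B}, D H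
  have hg : ∀ B : Set S, B.Countable → (g B).Countable := fun B hB => by
    refine hB.union (Set.Countable.biUnion ?_ fun H _ => hD H)
    have hcount := Set.countable_ofPred_finite_subset hB
    refine (hcount.preimage Finset.coe_injective).mono fun H hH => ?_
    exact ⟨H.finite_toSet, hH⟩
  let T : ℕ → Set S := fun n => g^[n] C
  have hstep : ∀ n, T (n + 1) = g (T n) := fun n => Function.iterate_succ_apply' g n C
  have hmono : Monotone T := monotone_nat_of_le_succ fun n => by
    rw [hstep]
    exact Set.subset_union_left
  refine ⟨⋃ n, T n, Set.subset_iUnion T 0, Set.countable_iUnion fun n => ?_, fun H hH => ?_⟩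
  · induction n with
    | zero => exact hC
    | succ n ih => rw [hstep]; exact hg _ ih
  · obtain ⟨n, hn⟩ := hmono.directed_le.exists_mem_subset_of_finset_subset_biUnion hH
    refine Set.Subset.trans ?_ (Set.subset_iUnion T (n + 1))
    rw [hstep]
    exact Set.Subset.trans (Set.subset_biUnion_of_mem (u := D)
      (show H ∈ {H : Finset S | (H : Set S) ⊆ T n} from hn)) Set.subset_union_right

/-- If every countable subset of `S` is contained in a countable amenable subsemigroup,
then `S` is amenable; conversely, if `S` is amenable and satisfies the Klawe condition then
every countable subset of `S` is contained in a countable amenable subsemigroup. -/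
theorem statement2 (S : Type*) [Semigroup S] :
    ((∀ C : Set S, C.Countable →
        ∃ T : Subsemigroup S, C ⊆ (T : Set S) ∧ (T : Set S).Countable ∧ SemigroupAmenable ↥T) →
      SemigroupAmenable S) ∧
    (SemigroupAmenable S → KlaweCondition S →
      ∀ C : Set S, C.Countable →
        ∃ T : Subsemigroup S, C ⊆ (T : Set S) ∧ (T : Set S).Countable ∧ SemigroupAmenable ↥T) := by
  classical
  constructor
  · intro h
    refine amenable_of_almost_invariant fun H ε hε => ?_
    obtain ⟨T, hHT, -, μ, hμ, hinv⟩ := h H H.countable_toSet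
    refine ⟨fun A => μ (Subtype.val ⁻¹' A),
      ⟨fun A => hμ.1 _, hμ.2.1, fun A B hAB => hμ.2.2 _ _ (hAB.preimage _)⟩, fun s hs A => ?_⟩
    have h1 : μ (Subtype.val ⁻¹' {t | s * t ∈ A}) = μ (Subtype.val ⁻¹' A) :=
      hinv ⟨s, hHT hs⟩ (Subtype.val ⁻¹' A)
    beta_reduce
    rw [h1, sub_self, abs_zero]
    exact hε.le
  · intro hS _ C hC
    choose F ν hν hF hinv using fun (H : Finset S) (n : ℕ) =>
      exists_finite_almost_invariant hS H (1 / ((n : ℝ) + 1)) Nat.one_div_pos_of_nat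
    -- Close `C` under products and under the supports of the almost invariant means.
    obtain ⟨T, hCT, hT, hclosed⟩ := exists_countable_closed
      (fun H => Set.image2 (· * ·) (H : Set S) H ∪ ⋃ n, (F H n : Set S))
      (fun H => (H.countable_toSet.image2 H.countable_toSet _).union
        (Set.countable_iUnion fun n => (F H n).countable_toSet)) C hC
    let T' : Subsemigroup S :=
      { carrier := T
        mul_mem' := fun {a b} ha hb => hclosed {a, b} (by simp [Set.insert_subset_iff, ha, hb])
          (Or.inl ⟨a, by simp, b, by simp, rfl⟩) }
    refine ⟨T', hCT, hT, amenable_of_almost_invariant fun H ε hε => ?_⟩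
    obtain ⟨n, hn⟩ := exists_nat_one_div_lt hε
    let H' : Finset S := H.image Subtype.val
    have hH' : (H' : Set S) ⊆ T := by
      intro x hx
      obtain ⟨y, -, rfl⟩ := Finset.mem_image.1 (Finset.mem_coe.1 hx)
      exact y.2
    have hνT : ν H' n T = 1 := by
      refine le_antisymm ((hν H' n).1 T).2 ?_
      rw [← hF H' n]
      exact (hν H' n).mono ((Set.subset_iUnion (fun n => (F H' n : Set S)) n).trans
        (Set.subset_union_right.trans (hclosed H' hH')))
    refine ⟨fun B => ν H' n (Subtype.val '' B), ⟨fun B => (hν H' n).1 _, ?_, fun A B hAB => ?_⟩,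
      fun s hs B => ?_⟩
    · beta_reduce
      rw [Set.image_univ, Subtype.range_coe_subtype]
      exact hνT
    · beta_reduce
      rw [Set.image_union]
      exact (hν H' n).2.2 _ _ ((Set.disjoint_image_iff Subtype.val_injective).2 hAB)
    · have h1 : (Subtype.val '' {t : T' | s * t ∈ B} : Set S) =
          {t | (s : S) * t ∈ (Subtype.val '' B : Set S)} ∩ T := by
        ext x
        constructor
        · rintro ⟨t, ht, rfl⟩
          exact ⟨⟨s * t, ht, rfl⟩, t.2⟩
        · rintro ⟨⟨b, hb, hbx⟩, hxT⟩
          refine ⟨⟨x, hxT⟩, ?_, rfl⟩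
          have : s * ⟨x, hxT⟩ = b := Subtype.ext hbx.symm
          change s * ⟨x, hxT⟩ ∈ B
          exact this ▸ hb
      simp only [h1]
      rw [(hν H' n).inter_eq hνT]
      exact (hinv H' n s (Finset.mem_image_of_mem _ hs) _).trans hn.le
end

section
/- Let S be a countable discrete inverse semigroup with identity 1 ∈ S and let α be a representation of S on a countable set X. Then X is S-paradoxical if and only if the uniform Roe algebra R_X is properly infinite. -/
/-!
A paradoxical decomposition of `X` amounts to two injections `g, h : X → X` with disjoint ranges
which move every point by an element of a fixed finite subset of `S`.

Such injections give isometries `δ_y ↦ δ_{g y}` and `δ_y ↦ δ_{h y}` with orthogonal ranges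
(`exists_isometry_of_pieces`); each is a finite sum of products of an indicator function and a
`V_s`, so it lies in the uniform Roe algebra.

Conversely, let `V, W` be isometries in the uniform Roe algebra with `V V* + W W* ≤ 1`, so that
`V* W = 0`, and approximate them within `1/4` by elements `V', W'` of the algebraic `*`-algebra.
The latter have finite propagation: for some finite `K ⊆ S`, the vectors `V' δ_x`, `W' δ_x` are
supported in `K x = {α_s x : s ∈ K}`.  The approximation makes `(a, b) ↦ V' a + W' b` injective,
hence for finite `F ⊆ X` it embeds `ℂ^F × ℂ^F` into the functions on `K F`, and
`2 |F| ≤ |K F|` (`two_mul_card_le`).  This is Hall's condition for the existence of an injection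
`f : X × Bool → X` with `f (x, i) ∈ K x`; its two halves are the injections wanted.  In particular
neither Tarski's theorem nor invariant means or traces are needed.
-/

open scoped ENNReal

/-- Mixin recording that a semigroup with a star operation is an inverse semigroup:
for every `s` the element `star s` is the unique `t` with `s t s = s` and `t s t = t`. -/
class IsInverseSemigroup (S : Type*) [Semigroup S] [Star S] : Prop where
  mul_star_mul_self : ∀ s : S, s * star s * s = s
  star_mul_self_mul_star : ∀ s : S, star s * s * star s = star s
  star_unique : ∀ s t : S, s * t * s = s → t * s * t = t → t = star s

/-- A representation of a unital inverse semigroup `S` on a set `X`: a unital semigroup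
homomorphism into the inverse semigroup of partial bijections of `X` (encoded as `PEquiv`s)
compatible with the involution.  The domain of the partial bijection `α s` is `D_{s*s}` and
its range is `D_{ss*}`; for an idempotent `e`, `D_e` is the domain of `α e`. -/
structure InverseSemigroupRep (S : Type*) [Monoid S] [Star S] (X : Type*) where
  α : S → X ≃. X
  map_one : α 1 = PEquiv.refl X
  map_star : ∀ s : S, α (star s) = (α s).symm
  map_mul : ∀ s t : S, α (s * t) = (α t).trans (α s)

/-- A finitely additive `[0,∞]`-valued measure on the power set of `X`. -/
def IsFinAddMeasure {X : Type*} (μ : Set X → ℝ≥0∞) : Prop :=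
  μ (∅ : Set X) = 0 ∧ ∀ A B : Set X, Disjoint A B → μ (A ∪ B) = μ A + μ B

namespace InverseSemigroupRep

variable {S X : Type*} [Monoid S] [Star S] (r : InverseSemigroupRep S X)

/-- The domain `D_{s*s}` of the partial bijection `α s`; for an idempotent `e`,
`r.dom e` is the set `D_e`. -/
def dom (s : S) : Set X := {x | ((r.α s) x).isSome}

/-- The image `α_s(B)` of a subset `B ⊆ X` under the partial bijection `α s`. -/
def im (s : S) (B : Set X) : Set X := {y | ∃ x ∈ B, (r.α s) x = some y}

/-- `A ⊆ X` is `S`-domain measurable: there is a finitely additive measure on `𝒫(X)`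
normalized at `A` and invariant on domains. -/
def SDomainMeasurableSet (A : Set X) : Prop :=
  ∃ μ : Set X → ℝ≥0∞, IsFinAddMeasure μ ∧ μ A = 1 ∧
    ∀ (s : S) (B : Set X), B ⊆ r.dom s → μ (r.im s B) = μ B

/-- `A ⊆ X` is `S`-amenable: there is a finitely additive measure on `𝒫(X)` normalized at
`A`, invariant on domains, and localized (`μ(B) = μ(B ∩ D_{t*t})` for all `t`). -/
def SAmenableSet (A : Set X) : Prop :=
  ∃ μ : Set X → ℝ≥0∞, IsFinAddMeasure μ ∧ μ A = 1 ∧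
    (∀ (s : S) (B : Set X), B ⊆ r.dom s → μ (r.im s B) = μ B) ∧
    (∀ (t : S) (B : Set X), μ B = μ (B ∩ r.dom t))

/-- `A ⊆ X` is `S`-paradoxical: `A` admits two disjoint families of pairwise disjoint
subsets, each contained in the appropriate domain, whose images partition `A` twice. -/
def SParadoxical (A : Set X) : Prop :=
  ∃ (n m : ℕ) (s : Fin n → S) (t : Fin m → S) (As : Fin n → Set X) (Bs : Fin m → Set X),
    (∀ i, As i ⊆ A) ∧ (∀ j, Bs j ⊆ A) ∧
    (∀ i, As i ⊆ r.dom (s i)) ∧ (∀ j, Bs j ⊆ r.dom (t j)) ∧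
    (∀ i j, i ≠ j → Disjoint (As i) (As j)) ∧
    (∀ i j, i ≠ j → Disjoint (Bs i) (Bs j)) ∧
    (∀ i j, Disjoint (As i) (Bs j)) ∧
    (∀ i j, i ≠ j → Disjoint (r.im (s i) (As i)) (r.im (s j) (As j))) ∧
    (∀ i j, i ≠ j → Disjoint (r.im (t i) (Bs i)) (r.im (t j) (Bs j))) ∧
    (⋃ i, r.im (s i) (As i)) = A ∧ (⋃ j, r.im (t j) (Bs j)) = A

/-- `A ⊆ X` is `S`-domain Følner: there is a sequence of finite non-empty subsets `F n ⊆ A`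
with `|α_s(F n ∩ D_{s*s}) \ F n| / |F n| → 0` for every `s ∈ S`. -/
def SDomainFolner (A : Set X) : Prop :=
  ∃ F : ℕ → Finset X, (∀ n, (F n).Nonempty) ∧ (∀ n, (F n : Set X) ⊆ A) ∧
    ∀ s : S, Filter.Tendsto
      (fun n => ((r.im s ((F n : Set X) ∩ r.dom s) \ (F n : Set X)).ncard : ℝ) / (F n).card)
      Filter.atTop (nhds 0)

end InverseSemigroupRep

noncomputable section

/-- The Hilbert space `ℓ²(X)`. -/
abbrev RoeHilbert (X : Type*) : Type _ := lp (fun _ : X => ℂ) 2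

/-- The canonical orthonormal basis vector `δ_x` of `ℓ²(X)`. -/
def roeDelta {X : Type*} [DecidableEq X] (x : X) : RoeHilbert X := lp.single 2 x 1

/-- The uniform Roe algebra of a family of operators `V_s` on `ℓ²(X)`: the norm closure of
the `*`-subalgebra of `B(ℓ²(X))` generated by `{V_s : s ∈ S}` together with `ℓ∞(X)` acting
by (diagonal) multiplication operators. -/
def RoeAlgebra {S X : Type*} [DecidableEq X]
    (Vs : S → (RoeHilbert X →L[ℂ] RoeHilbert X)) :
    StarSubalgebra ℂ (RoeHilbert X →L[ℂ] RoeHilbert X) :=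
  (StarAlgebra.adjoin ℂ
    (Set.range Vs ∪
      {T : RoeHilbert X →L[ℂ] RoeHilbert X |
        ∃ f : X → ℂ, ∀ x : X, T (roeDelta x) = f x • roeDelta x})).topologicalClosure

/-- `Vs` is the family of partial translation operators associated to a representation:
`V_s δ_x = δ_{α_s x}` for `x ∈ D_{s*s}` and `V_s δ_x = 0` otherwise. -/
def IsTranslationFamily {S X : Type*} [Monoid S] [Star S] [DecidableEq X]
    (r : InverseSemigroupRep S X) (Vs : S → (RoeHilbert X →L[ℂ] RoeHilbert X)) : Prop :=
  ∀ (s : S) (x : X), Vs s (roeDelta x) = ((r.α s) x).elim 0 (fun y => roeDelta y)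

end

noncomputable section

/-! ### Matrix coefficients of operators on `ℓ²(X)` -/

section Matrix

variable {X : Type*}

/-- Multiplication by the indicator function of `A` on `ℓ²(X)`. -/
def roeIndicator (A : Set X) : RoeHilbert X →L[ℂ] RoeHilbert X :=
  LinearMap.mkContinuous
    { toFun := fun f => ⟨A.indicator f, (lp.memℓp f).mono' (fun x => by
        by_cases h : x ∈ A <;> simp [h])⟩
      map_add' := fun f g => by
        ext x
        exact congrFun (Set.indicator_add A f g) x
      map_smul' := fun c f => by
        ext x
        exact congrFun (Set.indicator_const_smul A c f) x }
    1 (fun f => by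
      rw [one_mul]
      refine lp.norm_mono (by simp) fun x => ?_
      by_cases h : x ∈ A <;> simp [h])

theorem roeIndicator_apply (A : Set X) (f : RoeHilbert X) (x : X) :
    (roeIndicator A f) x = A.indicator f x := rfl

variable [DecidableEq X]

theorem roeDelta_apply (x y : X) : (roeDelta x : RoeHilbert X) y = if y = x then 1 else 0 := by
  unfold roeDelta
  split_ifs with h
  · subst h; exact lp.single_apply_self 2 _ _
  · exact lp.single_apply_ne 2 _ _ h

theorem inner_roeDelta_left (x : X) (f : RoeHilbert X) : inner ℂ (roeDelta x) f = f x := by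
  unfold roeDelta
  rw [lp.inner_single_left]
  simp

theorem inner_roeDelta_right (x : X) (f : RoeHilbert X) :
    inner ℂ f (roeDelta x) = starRingEnd ℂ (f x) := by
  rw [← inner_conj_symm, inner_roeDelta_left]

theorem clm_ext_roeDelta {T U : RoeHilbert X →L[ℂ] RoeHilbert X}
    (h : ∀ x, T (roeDelta x) = U (roeDelta x)) : T = U := by
  refine lp.ext_continuousLinearMap (by simp) fun x => ?_
  ext1
  simpa [roeDelta] using h x

theorem star_coeff (T : RoeHilbert X →L[ℂ] RoeHilbert X) (x y : X) :
    (star T (roeDelta x)) y = starRingEnd ℂ ((T (roeDelta y)) x) := by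
  rw [← inner_roeDelta_left, ContinuousLinearMap.star_eq_adjoint,
    ContinuousLinearMap.adjoint_inner_right, inner_roeDelta_right]

theorem mul_coeff (T U : RoeHilbert X →L[ℂ] RoeHilbert X) (x y : X) :
    ((T * U) (roeDelta x)) y = ∑' z, (U (roeDelta x)) z * (T (roeDelta z)) y := by
  rw [← inner_roeDelta_left, mul_apply_eq_comp,
    ← ContinuousLinearMap.adjoint_inner_left, ← ContinuousLinearMap.star_eq_adjoint,
    lp.inner_eq_tsum]
  simp [star_coeff]

theorem roeIndicator_roeDelta_of_mem {A : Set X} {x : X} (h : x ∈ A) :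
    roeIndicator A (roeDelta x) = roeDelta x := by
  ext y
  rw [roeIndicator_apply]
  by_cases hy : y ∈ A
  · simp [hy]
  · have : y ≠ x := by rintro rfl; exact hy h
    simp [hy, roeDelta_apply, this]

theorem roeIndicator_roeDelta_of_notMem {A : Set X} {x : X} (h : x ∉ A) :
    roeIndicator A (roeDelta x) = 0 := by
  ext y
  rw [roeIndicator_apply]
  by_cases hy : y ∈ A
  · have : y ≠ x := by rintro rfl; exact h hy
    simp [hy, roeDelta_apply, this]
  · simp [hy]

theorem star_mul_eq_of_map_roeDelta {V W : RoeHilbert X →L[ℂ] RoeHilbert X} {g h : X → X}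
    (hV : ∀ x, V (roeDelta x) = roeDelta (g x)) (hW : ∀ x, W (roeDelta x) = roeDelta (h x))
    (x y : X) : ((star V * W) (roeDelta x)) y = if g y = h x then 1 else 0 := by
  rw [mul_apply_eq_comp, hW, star_coeff, hV, roeDelta_apply]
  by_cases e : g y = h x
  · simp [e]
  · simp [e, Ne.symm e]

theorem star_mul_self_of_injective {V : RoeHilbert X →L[ℂ] RoeHilbert X} {g : X → X}
    (hV : ∀ x, V (roeDelta x) = roeDelta (g x)) (hg : Function.Injective g) :
    star V * V = 1 := by
  refine clm_ext_roeDelta fun x => ?_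
  ext y
  rw [star_mul_eq_of_map_roeDelta hV hV, one_apply_eq_self, roeDelta_apply]
  simp [hg.eq_iff]

end Matrix

/-! ### From paradoxical decompositions to isometries -/

section Forward

variable {S X : Type*} [DecidableEq X] {Vs : S → (RoeHilbert X →L[ℂ] RoeHilbert X)}

theorem translation_mem (s : S) : Vs s ∈ RoeAlgebra Vs :=
  StarSubalgebra.le_topologicalClosure _ (StarAlgebra.subset_adjoin _ _ (Or.inl ⟨s, rfl⟩))

theorem roeIndicator_mem (A : Set X) : roeIndicator A ∈ RoeAlgebra Vs := by
  classical
  refine StarSubalgebra.le_topologicalClosure _ (StarAlgebra.subset_adjoin _ _ (Or.inr ?_))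
  refine ⟨fun x => if x ∈ A then 1 else 0, fun x => ?_⟩
  by_cases h : x ∈ A
  · simp [h, roeIndicator_roeDelta_of_mem]
  · simp [h, roeIndicator_roeDelta_of_notMem]

variable [Monoid S] [Star S] {r : InverseSemigroupRep S X}

/-- Half of a paradoxical decomposition yields an injection `g : X → X`, the inverse of the
piecewise translation, which is implemented by an operator in the uniform Roe algebra. -/
theorem exists_isometry_of_pieces (hVs : IsTranslationFamily r Vs) {n : ℕ} (s : Fin n → S)
    (As : Fin n → Set X)
    (hA : ∀ i j, i ≠ j → Disjoint (As i) (As j))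
    (him : ∀ i j, i ≠ j → Disjoint (r.im (s i) (As i)) (r.im (s j) (As j)))
    (hU : (⋃ i, r.im (s i) (As i)) = Set.univ) :
    ∃ g : X → X, Function.Injective g ∧ (∀ y, ∃ i, g y ∈ As i) ∧
      ∃ V ∈ RoeAlgebra Vs, ∀ y, V (roeDelta y) = roeDelta (g y) := by
  have hex : ∀ y, ∃ i x, x ∈ As i ∧ r.α (s i) x = some y := by
    intro y
    have : y ∈ ⋃ i, r.im (s i) (As i) := hU ▸ Set.mem_univ y
    obtain ⟨i, x, hx, hxy⟩ := Set.mem_iUnion.1 this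
    exact ⟨i, x, hx, hxy⟩
  choose ι g hg hgy using hex
  refine ⟨g, ?_, fun y => ⟨ι y, hg y⟩,
    ∑ j, roeIndicator (As j) * Vs (star (s j)), ?_, ?_⟩
  · intro y z hyz
    have hι : ι y = ι z := by
      by_contra hne
      exact Set.disjoint_left.1 (hA _ _ hne) (hg y) (hyz ▸ hg z)
    have h1 := hgy y
    rw [hι, hyz, hgy z] at h1
    exact (Option.some.inj h1).symm
  · exact sum_mem fun j _ => mul_mem (roeIndicator_mem _) (translation_mem _)
  · intro y
    rw [sum_apply, Finset.sum_eq_single (ι y)]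
    · rw [mul_apply_eq_comp, hVs, r.map_star, (PEquiv.eq_some_iff _).2 (hgy y)]
      exact roeIndicator_roeDelta_of_mem (hg y)
    · intro j _ hj
      rw [mul_apply_eq_comp, hVs, r.map_star]
      cases hx : (r.α (s j)).symm y with
      | none => simp
      | some x =>
        refine roeIndicator_roeDelta_of_notMem fun hxA => ?_
        exact Set.disjoint_left.1 (him _ _ hj) ⟨x, hxA, (PEquiv.eq_some_iff _).1 hx⟩
          ⟨g y, hg y, hgy y⟩
    · simp

theorem isPositive_of_isometries {H : Type*} [NormedAddCommGroup H] [InnerProductSpace ℂ H]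
    [CompleteSpace H] {V W : H →L[ℂ] H} (hV : star V * V = 1) (hW : star W * W = 1)
    (hVW : star V * W = 0) :
    ContinuousLinearMap.IsPositive (1 - (V * star V + W * star W)) := by
  have hWV : star W * V = 0 := by simpa using congrArg star hVW
  -- `P = V V* + W W*` is a projection, so `1 - P = (1 - P) (1 - P)*`.
  have h : 1 - (V * star V + W * star W) =
      (1 - (V * star V + W * star W)) * star (1 - (V * star V + W * star W)) := by
    have e1 : V * star V * (V * star V) = V * star V := by
      rw [mul_assoc, ← mul_assoc (star V), hV, one_mul]
    have e2 : W * star W * (W * star W) = W * star W := by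
      rw [mul_assoc, ← mul_assoc (star W), hW, one_mul]
    have e3 : V * star V * (W * star W) = 0 := by
      rw [mul_assoc, ← mul_assoc (star V), hVW, zero_mul, mul_zero]
    have e4 : W * star W * (V * star V) = 0 := by
      rw [mul_assoc, ← mul_assoc (star W), hWV, zero_mul, mul_zero]
    simp only [star_sub, star_one, star_add, star_mul, star_star, mul_sub, sub_mul, mul_add,
      add_mul, mul_one, one_mul, e1, e2, e3, e4]
    abel
  rw [h]
  exact ContinuousLinearMap.isPositive_self_comp_adjoint _

end Forward

/-! ### Finite propagation and Hall's condition -/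

section Backward

variable {S X : Type*} [Monoid S] [Star S] [DecidableEq X]

/-- `T` has propagation in the finite set `K ⊆ S`: the matrix coefficient of `T` at `(y, x)`
vanishes unless `y = α_s x` for some `s ∈ K`. -/
def HasPropagation (r : InverseSemigroupRep S X) (K : Finset S)
    (T : RoeHilbert X →L[ℂ] RoeHilbert X) : Prop :=
  ∀ x y, (T (roeDelta x)) y ≠ 0 → ∃ s ∈ K, r.α s x = some y

theorem HasPropagation.mono {r : InverseSemigroupRep S X} {K L : Finset S}
    {T : RoeHilbert X →L[ℂ] RoeHilbert X} (h : HasPropagation r K T) (hKL : K ⊆ L) :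
    HasPropagation r L T := fun x y hxy => by
  obtain ⟨s, hs, e⟩ := h x y hxy
  exact ⟨s, hKL hs, e⟩

theorem hasPropagation_one_of_diagonal (r : InverseSemigroupRep S X)
    {T : RoeHilbert X →L[ℂ] RoeHilbert X} {f : X → ℂ}
    (hT : ∀ x, T (roeDelta x) = f x • roeDelta x) : HasPropagation r {1} T := by
  intro x y hxy
  refine ⟨1, Finset.mem_singleton_self 1, ?_⟩
  rw [hT] at hxy
  have : y = x := by
    by_contra hne
    exact hxy (by simp [roeDelta_apply, hne])
  rw [r.map_one, this]
  rfl

theorem exists_hasPropagation {r : InverseSemigroupRep S X}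
    {Vs : S → (RoeHilbert X →L[ℂ] RoeHilbert X)} (hVs : IsTranslationFamily r Vs)
    {T : RoeHilbert X →L[ℂ] RoeHilbert X}
    (hT : T ∈ StarAlgebra.adjoin ℂ (Set.range Vs ∪
      {T : RoeHilbert X →L[ℂ] RoeHilbert X |
        ∃ f : X → ℂ, ∀ x : X, T (roeDelta x) = f x • roeDelta x})) :
    ∃ K : Finset S, HasPropagation r K T := by
  classical
  induction hT using StarAlgebra.adjoin_induction with
  | mem T hT =>
    rcases hT with ⟨s, rfl⟩ | ⟨f, hf⟩
    · refine ⟨{s}, fun x y hxy => ⟨s, Finset.mem_singleton_self s, ?_⟩⟩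
      rw [hVs] at hxy
      cases hx : r.α s x with
      | none => simp [hx] at hxy
      | some z =>
        by_contra hne
        have hyz : y ≠ z := fun e => hne (by rw [e])
        exact hxy (by simp [hx, roeDelta_apply, hyz])
    · exact ⟨{1}, hasPropagation_one_of_diagonal r hf⟩
  | algebraMap c =>
    exact ⟨{1}, hasPropagation_one_of_diagonal r (f := fun _ => c) fun x => by
      simp [Algebra.algebraMap_eq_smul_one]⟩
  | add T U _ _ hT hU =>
    obtain ⟨K, hK⟩ := hT
    obtain ⟨L, hL⟩ := hU
    refine ⟨K ∪ L, fun x y hxy => ?_⟩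
    by_cases h : (T (roeDelta x)) y = 0
    · refine hL.mono Finset.subset_union_right x y fun h' => hxy ?_
      simp [h, h']
    · exact hK.mono Finset.subset_union_left x y h
  | mul T U _ _ hT hU =>
    obtain ⟨K, hK⟩ := hT
    obtain ⟨L, hL⟩ := hU
    refine ⟨Finset.image₂ (· * ·) K L, fun x y hxy => ?_⟩
    rw [mul_coeff] at hxy
    obtain ⟨z, hz⟩ : ∃ z, (U (roeDelta x)) z * (T (roeDelta z)) y ≠ 0 := by
      by_contra! h
      exact hxy (by simp [h])
    obtain ⟨t, ht, hxz⟩ := hL x z (left_ne_zero_of_mul hz)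
    obtain ⟨s, hs, hzy⟩ := hK z y (right_ne_zero_of_mul hz)
    refine ⟨s * t, Finset.mem_image₂_of_mem hs ht, ?_⟩
    rw [r.map_mul]
    exact (PEquiv.trans_eq_some _ _ _ _).2 ⟨z, hxz, hzy⟩
  | star T _ hT =>
    obtain ⟨K, hK⟩ := hT
    refine ⟨K.image star, fun x y hxy => ?_⟩
    rw [star_coeff] at hxy
    obtain ⟨s, hs, e⟩ := hK y x fun h => hxy (by simp [h])
    refine ⟨star s, Finset.mem_image_of_mem _ hs, ?_⟩
    rw [r.map_star]
    exact (PEquiv.eq_some_iff _).2 e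

theorem exists_approx {r : InverseSemigroupRep S X}
    {Vs : S → (RoeHilbert X →L[ℂ] RoeHilbert X)} (hVs : IsTranslationFamily r Vs)
    {T : RoeHilbert X →L[ℂ] RoeHilbert X} (hT : T ∈ RoeAlgebra Vs) {ε : ℝ} (hε : 0 < ε) :
    ∃ (K : Finset S) (T' : RoeHilbert X →L[ℂ] RoeHilbert X),
      HasPropagation r K T' ∧ ‖T - T'‖ < ε := by
  have hT' := hT
  rw [RoeAlgebra, ← SetLike.mem_coe, StarSubalgebra.topologicalClosure_coe] at hT'
  obtain ⟨T', hmem, hd⟩ := Metric.mem_closure_iff.1 hT' ε hε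
  obtain ⟨K, hK⟩ := exists_hasPropagation hVs hmem
  exact ⟨K, T', hK, by rwa [← dist_eq_norm]⟩

theorem norm_star_apply_sq_add_le {H : Type*} [NormedAddCommGroup H] [InnerProductSpace ℂ H]
    [CompleteSpace H] {V W : H →L[ℂ] H}
    (h : ContinuousLinearMap.IsPositive (1 - (V * star V + W * star W))) (ξ : H) :
    ‖star V ξ‖ ^ 2 + ‖star W ξ‖ ^ 2 ≤ ‖ξ‖ ^ 2 := by
  have h1 := h.2 ξ
  have key : ∀ U : H →L[ℂ] H,
      RCLike.re (inner ℂ (U (star U ξ)) ξ) = ‖star U ξ‖ ^ 2 := by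
    intro U
    rw [← ContinuousLinearMap.adjoint_inner_right, ← ContinuousLinearMap.star_eq_adjoint,
      inner_self_eq_norm_sq]
  rw [ContinuousLinearMap.reApplyInnerSelf_apply] at h1
  simp only [sub_apply, add_apply,
    one_apply_eq_self, mul_apply_eq_comp, inner_sub_left,
    inner_add_left, map_sub, map_add, key, inner_self_eq_norm_sq] at h1
  linarith

/-- Two isometries with orthogonal ranges stay jointly injective under perturbations of norm
at most `1/4`: applying `V*` and `W*` to the relation bounds `‖a‖` and `‖b‖` by `(‖a‖ + ‖b‖) / 4`
each. -/
theorem eq_zero_of_approx {H : Type*} [NormedAddCommGroup H] [InnerProductSpace ℂ H]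
    [CompleteSpace H] {V W V' W' : H →L[ℂ] H} (hV : star V * V = 1) (hW : star W * W = 1)
    (h : ContinuousLinearMap.IsPositive (1 - (V * star V + W * star W)))
    (hV' : ‖V - V'‖ ≤ 1 / 4) (hW' : ‖W - W'‖ ≤ 1 / 4) {a b : H} (hab : V' a + W' b = 0) :
    a = 0 ∧ b = 0 := by
  have hVa : ∀ ξ, star V (V ξ) = ξ := fun ξ => by
    simpa using congrArg (fun T : H →L[ℂ] H => T ξ) hV
  have hWa : ∀ ξ, star W (W ξ) = ξ := fun ξ => by
    simpa using congrArg (fun T : H →L[ℂ] H => T ξ) hW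
  have hle := norm_star_apply_sq_add_le h
  have hcV : ∀ ξ, ‖star V ξ‖ ≤ ‖ξ‖ := fun ξ =>
    le_of_sq_le_sq (by nlinarith [hle ξ, sq_nonneg ‖star W ξ‖]) (norm_nonneg _)
  have hcW : ∀ ξ, ‖star W ξ‖ ≤ ‖ξ‖ := fun ξ =>
    le_of_sq_le_sq (by nlinarith [hle ξ, sq_nonneg ‖star V ξ‖]) (norm_nonneg _)
  have hnorm : ∀ U : H →L[ℂ] H, star U * U = 1 → ∀ ξ, ‖U ξ‖ ^ 2 = ‖ξ‖ ^ 2 := by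
    intro U hU ξ
    have e : star U (U ξ) = ξ := by simpa using congrArg (fun T : H →L[ℂ] H => T ξ) hU
    rw [← inner_self_eq_norm_sq (𝕜 := ℂ), ← ContinuousLinearMap.adjoint_inner_right,
      ← ContinuousLinearMap.star_eq_adjoint, e, inner_self_eq_norm_sq]
  have hVW : ∀ ξ, star V (W ξ) = 0 := fun ξ => by
    have h1 := hle (W ξ)
    rw [hWa, hnorm W hW] at h1
    have : ‖star V (W ξ)‖ ^ 2 = 0 := le_antisymm (by linarith) (sq_nonneg _)
    simpa using this
  have hWV : ∀ ξ, star W (V ξ) = 0 := fun ξ => by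
    have h1 := hle (V ξ)
    rw [hVa, hnorm V hV] at h1
    have : ‖star W (V ξ)‖ ^ 2 = 0 := le_antisymm (by linarith) (sq_nonneg _)
    simpa using this
  have herr : V a + W b = (V - V') a + (W - W') b := by
    have : (V - V') a + (W - W') b = V a + W b - (V' a + W' b) := by
      simp only [sub_apply]; abel
    rw [this, hab, sub_zero]
  have hbound : ‖V a + W b‖ ≤ 1 / 4 * ‖a‖ + 1 / 4 * ‖b‖ := by
    rw [herr]
    exact (norm_add_le _ _).trans (add_le_add ((V - V').le_of_opNorm_le hV' a)
      ((W - W').le_of_opNorm_le hW' b))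
  have ha := hcV (V a + W b)
  have hb := hcW (V a + W b)
  rw [map_add, hVa, hVW, add_zero] at ha
  rw [map_add, hWa, hWV, zero_add] at hb
  have := norm_nonneg a
  have := norm_nonneg b
  exact ⟨norm_eq_zero.1 (by linarith), norm_eq_zero.1 (by linarith)⟩

/-- The finite set `{α_s x : s ∈ K}`. -/
def neighbors (r : InverseSemigroupRep S X) (K : Finset S) (x : X) : Finset X :=
  K.biUnion fun s => (r.α s x).toFinset

theorem mem_neighbors {r : InverseSemigroupRep S X} {K : Finset S} {x y : X} :
    y ∈ neighbors r K x ↔ ∃ s ∈ K, r.α s x = some y := by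
  simp [neighbors]

/-- A finitely supported function on `X` as a linear combination of the basis vectors. -/
def finCombo (F : Finset X) : (F → ℂ) →ₗ[ℂ] RoeHilbert X :=
  Fintype.linearCombination ℂ fun x : F => (roeDelta x.1 : RoeHilbert X)

theorem finCombo_apply (F : Finset X) (a : F → ℂ) :
    finCombo F a = ∑ x : F, a x • (roeDelta x.1 : RoeHilbert X) := by
  simp [finCombo, Fintype.linearCombination_apply]

theorem finCombo_eq_zero {F : Finset X} {a : F → ℂ} (h : finCombo F a = 0) : a = 0 := by
  funext x
  have h1 : inner ℂ (roeDelta x.1) (finCombo F a) = 0 := by rw [h, inner_zero_right]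
  rw [finCombo_apply, inner_sum, Finset.sum_eq_single x] at h1
  · rwa [inner_smul_right, inner_roeDelta_left, roeDelta_apply, if_pos rfl, mul_one] at h1
  · intro y _ hy
    have : x.1 ≠ y.1 := fun e => hy (Subtype.ext e.symm)
    simp [inner_smul_right, inner_roeDelta_left, roeDelta_apply, this]
  · simp

theorem HasPropagation.apply_finCombo_eq_zero {r : InverseSemigroupRep S X} {K : Finset S}
    {T : RoeHilbert X →L[ℂ] RoeHilbert X} (hT : HasPropagation r K T) {F : Finset X}
    (a : F → ℂ) {y : X} (hy : y ∉ F.biUnion (neighbors r K)) : (T (finCombo F a)) y = 0 := by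
  rw [← inner_roeDelta_left, finCombo_apply, map_sum, inner_sum]
  refine Finset.sum_eq_zero fun x _ => ?_
  rw [map_smul, inner_smul_right, inner_roeDelta_left]
  have : (T (roeDelta x.1)) y = 0 := by
    by_contra h
    exact hy (Finset.mem_biUnion.2 ⟨x.1, x.2, mem_neighbors.2 (hT _ _ h)⟩)
  rw [this, mul_zero]

theorem two_mul_card_le {r : InverseSemigroupRep S X} {K : Finset S}
    {V W V' W' : RoeHilbert X →L[ℂ] RoeHilbert X} (hV : star V * V = 1) (hW : star W * W = 1)
    (h : ContinuousLinearMap.IsPositive (1 - (V * star V + W * star W)))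
    (hV' : ‖V - V'‖ ≤ 1 / 4) (hW' : ‖W - W'‖ ≤ 1 / 4)
    (hVK : HasPropagation r K V') (hWK : HasPropagation r K W') (F : Finset X) :
    2 * F.card ≤ (F.biUnion (neighbors r K)).card := by
  let N := F.biUnion (neighbors r K)
  let L : (F → ℂ) × (F → ℂ) →ₗ[ℂ] (N → ℂ) :=
    { toFun := fun p n => (V' (finCombo F p.1) + W' (finCombo F p.2)) n.1
      map_add' := fun p q => by
        funext n
        simp only [Prod.fst_add, Prod.snd_add, map_add, lp.coeFn_add, Pi.add_apply]
        ring
      map_smul' := fun c p => by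
        funext n
        simp only [Prod.smul_fst, Prod.smul_snd, map_smul, lp.coeFn_add, lp.coeFn_smul,
          Pi.add_apply, Pi.smul_apply, RingHom.id_apply, smul_add] }
  have hL : Function.Injective L := by
    rw [← LinearMap.ker_eq_bot, LinearMap.ker_eq_bot']
    rintro ⟨a, b⟩ hab
    have h0 : V' (finCombo F a) + W' (finCombo F b) = 0 := by
      ext y
      by_cases hy : y ∈ N
      · exact congrFun hab ⟨y, hy⟩
      · rw [lp.coeFn_add, Pi.add_apply, hVK.apply_finCombo_eq_zero a hy,
          hWK.apply_finCombo_eq_zero b hy]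
        simp
    obtain ⟨ha, hb⟩ := eq_zero_of_approx hV hW h hV' hW' h0
    rw [finCombo_eq_zero ha, finCombo_eq_zero hb]
    rfl
  have := LinearMap.finrank_le_finrank_of_injective hL
  simp only [Module.finrank_prod, Module.finrank_fintype_fun_eq_card, Fintype.card_coe] at this
  change _ ≤ N.card
  omega

theorem sParadoxical_of_injective (r : InverseSemigroupRep S X) (K : Finset S)
    (f : X × Bool → X) (hf : Function.Injective f)
    (hfK : ∀ p, f p ∈ neighbors r K p.1) :
    r.SParadoxical Set.univ := by
  choose σ hσ hσf using fun p => mem_neighbors.1 (hfK p)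
  let e := K.equivFin
  -- On the `k`-th piece, `f (·, i)` is the translation by the `k`-th element of `K`.
  let P : Bool → Fin K.card → Set X :=
    fun i k => {y | ∃ x, f (x, i) = y ∧ e ⟨σ (x, i), hσ _⟩ = k}
  let t : Fin K.card → S := fun k => star (e.symm k).1
  have hmove : ∀ i x, r.α (t (e ⟨σ (x, i), hσ _⟩)) (f (x, i)) = some x := by
    intro i x
    simp only [t, Equiv.symm_apply_apply, r.map_star]
    exact (PEquiv.eq_some_iff _).2 (hσf (x, i))
  have him : ∀ i k, r.im (t k) (P i k) = {x | e ⟨σ (x, i), hσ _⟩ = k} := by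
    intro i k
    ext x
    constructor
    · rintro ⟨_, ⟨z, rfl, rfl⟩, hx⟩
      rw [hmove] at hx
      cases hx
      rfl
    · rintro rfl
      exact ⟨f (x, i), ⟨x, rfl, rfl⟩, hmove i x⟩
  have hdom : ∀ i k, P i k ⊆ r.dom (t k) := by
    rintro i k _ ⟨x, rfl, rfl⟩
    simp only [InverseSemigroupRep.dom, Set.mem_ofPred_eq, hmove, Option.isSome_some]
  have hdisj : ∀ i k l, k ≠ l → Disjoint (P i k) (P i l) := by
    intro i k l hkl
    refine Set.disjoint_left.2 ?_
    rintro _ ⟨x, rfl, rfl⟩ ⟨z, hz, rfl⟩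
    have hzx : z = x := (Prod.ext_iff.1 (hf hz)).1
    subst hzx
    exact hkl rfl
  have hdisj' : ∀ i k l, k ≠ l → Disjoint (r.im (t k) (P i k)) (r.im (t l) (P i l)) := by
    intro i k l hkl
    rw [him, him]
    exact Set.disjoint_left.2 fun x hx hx' => hkl (hx.symm.trans hx')
  have hunion : ∀ i, (⋃ k, r.im (t k) (P i k)) = Set.univ := by
    intro i
    refine Set.eq_univ_of_forall fun x => Set.mem_iUnion.2 ⟨e ⟨σ (x, i), hσ _⟩, ?_⟩
    rw [him]
    rfl
  refine ⟨K.card, K.card, t, t, P true, P false, fun _ => Set.subset_univ _,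
    fun _ => Set.subset_univ _, hdom _, hdom _, hdisj _, hdisj _, ?_, hdisj' _, hdisj' _,
    hunion _, hunion _⟩
  intro k l
  refine Set.disjoint_left.2 ?_
  rintro _ ⟨x, rfl, -⟩ ⟨z, hz, -⟩
  simpa using (Prod.ext_iff.1 (hf hz)).2

end Backward

end

/-- `X` is `S`-paradoxical if and only if the uniform Roe algebra `R_X` is properly
infinite, i.e. there are `V, W ∈ R_X` with `V*V = W*W = 1` and `VV* + WW* ≤ 1`. -/
theorem statement17 {S X : Type*} [Monoid S] [Star S] [IsInverseSemigroup S]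
    [Countable S] [Countable X] [DecidableEq X]
    (r : InverseSemigroupRep S X) (Vs : S → (RoeHilbert X →L[ℂ] RoeHilbert X))
    (hVs : IsTranslationFamily r Vs) :
    r.SParadoxical (Set.univ : Set X) ↔
      ∃ V W : RoeHilbert X →L[ℂ] RoeHilbert X,
        V ∈ RoeAlgebra Vs ∧ W ∈ RoeAlgebra Vs ∧
        star V * V = 1 ∧ star W * W = 1 ∧
        ContinuousLinearMap.IsPositive (1 - (V * star V + W * star W)) := by
  classical
  constructor
  · rintro ⟨n, m, s, t, As, Bs, -, -, -, -, hA, hB, hAB, hiA, hiB, hUA, hUB⟩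
    obtain ⟨g, hg, hgA, V, hVmem, hV⟩ := exists_isometry_of_pieces hVs s As hA hiA hUA
    obtain ⟨k, hk, hkB, W, hWmem, hW⟩ := exists_isometry_of_pieces hVs t Bs hB hiB hUB
    have hV1 := star_mul_self_of_injective hV hg
    have hW1 := star_mul_self_of_injective hW hk
    refine ⟨V, W, hVmem, hWmem, hV1, hW1, isPositive_of_isometries hV1 hW1 ?_⟩
    refine clm_ext_roeDelta fun x => ?_
    ext y
    rw [star_mul_eq_of_map_roeDelta hV hW, if_neg]
    · simp
    · intro hgk
      obtain ⟨i, hi⟩ := hgA y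
      obtain ⟨j, hj⟩ := hkB x
      exact Set.disjoint_left.1 (hAB i j) hi (hgk ▸ hj)
  · rintro ⟨V, W, hVmem, hWmem, hV, hW, hpos⟩
    obtain ⟨K₁, V', hK₁, hV'⟩ := exists_approx hVs hVmem (ε := 1 / 4) (by norm_num)
    obtain ⟨K₂, W', hK₂, hW'⟩ := exists_approx hVs hWmem (ε := 1 / 4) (by norm_num)
    have hcard := two_mul_card_le hV hW hpos hV'.le hW'.le
      (hK₁.mono (Finset.subset_union_left (s₂ := K₂)))
      (hK₂.mono (Finset.subset_union_right (s₁ := K₁)))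
    obtain ⟨f, hf, hfK⟩ := (Finset.all_card_le_biUnion_card_iff_exists_injective
      (fun p : X × Bool => neighbors r (K₁ ∪ K₂) p.1)).1 (by
        intro G
        -- `G ⊆ F × Bool` for the projection `F` of `G`, which has the same neighbours.
        have h1 : G.card ≤ 2 * (G.image Prod.fst).card := by
          have hsub : G ⊆ G.image Prod.fst ×ˢ (Finset.univ : Finset Bool) := fun p hp =>
            Finset.mem_product.2 ⟨Finset.mem_image_of_mem _ hp, Finset.mem_univ _⟩
          have := Finset.card_le_card hsub
          rw [Finset.card_product, Finset.card_univ, Fintype.card_bool] at this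
          omega
        have h2 := hcard (G.image Prod.fst)
        rw [Finset.image_biUnion] at h2
        exact h1.trans h2)
    exact sParadoxical_of_injective r _ f hf hfK
end
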